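/- For each ε ∈ (0,1] let ξ_ε be a smooth complete vector field on ℝ^n with flow Φ_ε : ℝ × ℝ^n → ℝ^n; assume (ξ_ε) is a moderate net of maps ℝ^n → ℝ^n and (Φ_ε) is a c-bounded moderate net of maps ℝ^{1+n} → ℝ^n. Let (f_ε) be a moderate net of smooth functions on ℝ^n. Then the following are equivalent: (a) f is invariant under the generalized group action Φ, i.e. the net (η,x) ↦ f_ε(Φ_ε(η,x)) − f_ε(x) is negligible on ℝ × ℝ^n; (b) ξ(f) = 0 in the Colombeau algebra, i.e. the net x ↦ Df_ε(x)·ξ_ε(x) is negligible on ℝ^n. -/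

import Mathlib

/-!
Along an orbit, `d/dη f(Φ(η, x)) = h(Φ(η, x))` with `h = Df · ξ`, and `h` is a moderate net by the
Leibniz rule.

* If `f ∘ Φ - f` is negligible, then `s * h(x)` differs from `f(Φ(s, x)) - f(x)` by at most a
  constant times `ε ^ (-r) * s ^ 2`, where `ε ^ (-r)` bounds `Dh · ξ` on a compact set containing
  the orbits of times in `[0, 1]`. The choice `s = ε ^ (r + m + 1)` makes `h(x)` of size
  `O(ε ^ (m + 1))`.
* If `h` is negligible, then the mean value inequality, together with c-boundedness of `Φ`, makes
  the values of `f ∘ Φ - f` negligible.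

In the second implication `f ∘ Φ - f` also has to be moderate. This is the Faà di Bruno bound
(`IsMod.comp`), which needs `Φ ε` to be genuinely smooth jointly in time and position: otherwise
its iterated derivatives are junk and the componentwise bounds on them say nothing. Smoothness of
the flow of a smooth field is therefore proved first (`IsBddFlow.contDiffOn`). Grönwall's
inequality shows that difference quotients in the initial value converge to a solution of the
variational equation (`IsBddFlow.hasFDerivAt_init`), so the tangent map of a flow is the flow of the
tangent field (`IsBddFlow.tangent`); induction on the order of differentiability, over all phase
spaces at once, finishes the argument. All of this takes place over regions where the flow is
bounded, and c-boundedness provides such regions for small `ε` (`isLocSmooth_flow`).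
-/

open Topology Filter Set

/-- A net of smooth real-valued functions on a normed space is moderate: on each compact
set, every iterated derivative grows at most like some negative power of `ε`. -/
def ModerateF {E : Type*} [NormedAddCommGroup E] [NormedSpace ℝ E]
    (u : ℝ → E → ℝ) : Prop :=
  ∀ K : Set E, IsCompact K → ∀ k : ℕ, ∃ p : ℕ, ∃ C > (0:ℝ), ∃ ε₀ > (0:ℝ),
    ∀ ε : ℝ, 0 < ε → ε < ε₀ → ∀ x ∈ K, ‖iteratedFDeriv ℝ k (u ε) x‖ ≤ C / ε ^ p

/-- A net of smooth real-valued functions is negligible: it is moderate and its values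
are `O(ε^m)` for every `m` uniformly on compact sets. -/
def NegligibleF {E : Type*} [NormedAddCommGroup E] [NormedSpace ℝ E]
    (u : ℝ → E → ℝ) : Prop :=
  ModerateF u ∧ ∀ K : Set E, IsCompact K → ∀ m : ℕ, ∃ C > (0:ℝ), ∃ ε₀ > (0:ℝ),
    ∀ ε : ℝ, 0 < ε → ε < ε₀ → ∀ x ∈ K, |u ε x| ≤ C * ε ^ m

/-- A net of maps into `ℝ^n` is moderate if each component is moderate. -/
def ModerateV {E : Type*} [NormedAddCommGroup E] [NormedSpace ℝ E] {n : ℕ}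
    (u : ℝ → E → (Fin n → ℝ)) : Prop :=
  ∀ i : Fin n, ModerateF (fun ε x => u ε x i)

/-- A net of maps is c-bounded: each compact set is mapped into a fixed compact set
for small `ε`. -/
def CBoundedMap {X Y : Type*} [TopologicalSpace X] [TopologicalSpace Y]
    (u : ℝ → X → Y) : Prop :=
  ∀ K : Set X, IsCompact K → ∃ ε₀ > (0:ℝ), ∃ K' : Set Y, IsCompact K' ∧
    ∀ ε : ℝ, 0 < ε → ε < ε₀ → ∀ x ∈ K, u ε x ∈ K'

/-! ### Smooth dependence of a flow on time and initial value -/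

section Flow

universe u

/-- `Φ` is the flow of the autonomous field `ξ` for times in `(-T, T)` and initial values in `U`,
and it stays in a bounded region. Boundedness is part of the notion because it supplies uniform
Lipschitz constants for `ξ` along all trajectories. -/
structure IsBddFlow {E : Type u} [NormedAddCommGroup E] [NormedSpace ℝ E]
    (ξ : E → E) (Φ : ℝ × E → E) (T : ℝ) (U : Set E) : Prop where
  init : ∀ x ∈ U, Φ (0, x) = x
  deriv : ∀ t ∈ Ioo (-T) T, ∀ x ∈ U, HasDerivAt (fun s => Φ (s, x)) (ξ (Φ (t, x))) t
  bdd : ∃ M, ∀ t ∈ Ioo (-T) T, ∀ x ∈ U, ‖Φ (t, x)‖ ≤ M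

variable {E : Type u} [NormedAddCommGroup E] [NormedSpace ℝ E]

lemma gronwall_pos {K T δ e : ℝ} (hK : 0 ≤ K) (hδ : 0 ≤ δ) (he : 0 ≤ e)
    {y y' : ℝ → E} (hy : ∀ t ∈ Ioo (-T) T, HasDerivAt y (y' t) t) (h0 : ‖y 0‖ ≤ δ)
    (hb : ∀ t ∈ Ioo (-T) T, ‖y' t‖ ≤ K * ‖y t‖ + e) {t : ℝ} (ht0 : 0 ≤ t) (ht : t < T) :
    ‖y t‖ ≤ Real.exp ((K + 1) * T) * (δ + e) := by
  have hsub : ∀ s ∈ Icc 0 t, s ∈ Ioo (-T) T := fun s hs =>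
    ⟨by linarith [hs.1], by linarith [hs.2]⟩
  -- `K` is enlarged to `K + 1` so that division by the growth rate is harmless.
  have h := norm_le_gronwallBound_of_norm_deriv_right_le (f := y) (f' := y') (δ := δ) (K := K + 1)
    (ε := e) (a := 0) (b := t)
    (fun s hs => (hy s (hsub s hs)).continuousAt.continuousWithinAt)
    (fun s hs => (hy s (hsub s ⟨hs.1, hs.2.le⟩)).hasDerivWithinAt) h0
    (fun s hs => (hb s (hsub s ⟨hs.1, hs.2.le⟩)).trans (by nlinarith [norm_nonneg (y s)]))
    t ⟨ht0, le_rfl⟩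
  refine h.trans ?_
  rw [gronwallBound_of_K_ne_0 (by positivity)]
  have h1 : Real.exp ((K + 1) * (t - 0)) ≤ Real.exp ((K + 1) * T) :=
    Real.exp_le_exp.2 (mul_le_mul_of_nonneg_left (by linarith) (by positivity))
  have h2 : e / (K + 1) ≤ e := div_le_self he (by linarith)
  have h3 : 0 ≤ Real.exp ((K + 1) * (t - 0)) - 1 := by
    have := Real.one_le_exp (x := (K + 1) * (t - 0)) (by rw [sub_zero]; positivity)
    linarith
  have h4 : e / (K + 1) * (Real.exp ((K + 1) * (t - 0)) - 1) ≤ e * Real.exp ((K + 1) * T) :=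
    mul_le_mul h2 (by linarith) h3 he
  nlinarith [mul_le_mul_of_nonneg_left h1 hδ]

/-- Grönwall's inequality on a time interval around `0`, with a constant depending only on the
growth rate and the length of the interval. -/
lemma gronwall_sym {K T δ e : ℝ} (hK : 0 ≤ K) (hδ : 0 ≤ δ) (he : 0 ≤ e)
    {y y' : ℝ → E} (hy : ∀ t ∈ Ioo (-T) T, HasDerivAt y (y' t) t) (h0 : ‖y 0‖ ≤ δ)
    (hb : ∀ t ∈ Ioo (-T) T, ‖y' t‖ ≤ K * ‖y t‖ + e) {t : ℝ} (ht : t ∈ Ioo (-T) T) :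
    ‖y t‖ ≤ Real.exp ((K + 1) * T) * (δ + e) := by
  rcases le_total 0 t with h | h
  · exact gronwall_pos hK hδ he hy h0 hb h ht.2
  · have hn : ∀ s ∈ Ioo (-T) T, -s ∈ Ioo (-T) T := fun s hs =>
      ⟨by linarith [hs.2], by linarith [hs.1]⟩
    have := gronwall_pos (T := T) (t := -t) (y := fun s => y (-s)) (y' := fun s => -y' (-s))
      hK hδ he
      (fun s hs => by
        have := (hy (-s) (hn s hs)).scomp s (hasDerivAt_neg s)
        simpa using! this)
      (by simpa using h0)
      (fun s hs => by simpa using hb (-s) (hn s hs)) (by linarith) (by linarith [ht.1])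
    simpa using this

/-- Solutions of a linear equation `y' = A y` arise as limits of approximate solutions. -/
lemma linear_ode_of_approx [CompleteSpace E] {T L : ℝ} (hL : 0 ≤ L)
    {A : ℝ → E →L[ℝ] E} (hA : ∀ t ∈ Ioo (-T) T, ‖A t‖ ≤ L)
    {v : E} {q q' : ℕ → ℝ → E} {e : ℕ → ℝ} (he : ∀ n, 0 ≤ e n) (he0 : Tendsto e atTop (𝓝 0))
    (hq0 : ∀ n, q n 0 = v) (hq : ∀ n, ∀ t ∈ Ioo (-T) T, HasDerivAt (q n) (q' n t) t)
    (hqe : ∀ n, ∀ t ∈ Ioo (-T) T, ‖q' n t - A t (q n t)‖ ≤ e n) (hT : 0 < T) :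
    ∃ y : ℝ → E, y 0 = v ∧ ∀ t ∈ Ioo (-T) T, HasDerivAt y (A t (y t)) t := by
  set G := Real.exp ((L + 1) * T) with hG
  have hGp : 0 < G := Real.exp_pos _
  have hcau : ∀ n m, ∀ t ∈ Ioo (-T) T, ‖q n t - q m t‖ ≤ G * (e n + e m) := by
    intro n m t ht
    have := gronwall_sym (T := T) (K := L) (δ := 0) (e := e n + e m)
      (y := fun s => q n s - q m s) (y' := fun s => q' n s - q' m s) hL le_rfl
      (add_nonneg (he n) (he m)) (fun s hs => (hq n s hs).sub (hq m s hs)) (by simp [hq0])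
      (fun s hs => by
        have h1 : q' n s - q' m s = A s (q n s - q m s) + ((q' n s - A s (q n s))
            - (q' m s - A s (q m s))) := by rw [map_sub]; abel
        rw [h1]
        refine (norm_add_le _ _).trans (add_le_add ?_ ?_)
        · exact (A s).le_of_opNorm_le (hA s hs) _
        · exact (norm_sub_le _ _).trans (add_le_add (hqe n s hs) (hqe m s hs))) ht
    simpa using this
  have hlim : ∀ t, ∃ l, t ∈ Ioo (-T) T → Tendsto (fun n => q n t) atTop (𝓝 l) := by
    intro t
    by_cases ht : t ∈ Ioo (-T) T
    · have hc : CauchySeq (fun n => q n t) := by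
        rw [Metric.cauchySeq_iff]
        intro r hr
        have h1 : ∀ᶠ n in atTop, e n < r / (2 * G) := he0.eventually_lt_const (by positivity)
        obtain ⟨N, hN⟩ := eventually_atTop.1 h1
        refine ⟨N, fun n hn m hm => ?_⟩
        rw [dist_eq_norm]
        refine (hcau n m t ht).trans_lt ?_
        calc G * (e n + e m) < G * (r / (2 * G) + r / (2 * G)) :=
              mul_lt_mul_of_pos_left (add_lt_add (hN n hn) (hN m hm)) hGp
          _ = r := by field_simp; ring
      obtain ⟨l, hl⟩ := cauchySeq_tendsto_of_complete hc
      exact ⟨l, fun _ => hl⟩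
    · exact ⟨0, fun h => absurd h ht⟩
  choose y hy using hlim
  have hqy : ∀ n, ∀ t ∈ Ioo (-T) T, ‖q n t - y t‖ ≤ G * e n := by
    intro n t ht
    have h1 : Tendsto (fun m => ‖q n t - q m t‖) atTop (𝓝 ‖q n t - y t‖) :=
      (tendsto_const_nhds.sub (hy t ht)).norm
    have h2 : Tendsto (fun m => G * (e n + e m)) atTop (𝓝 (G * (e n + 0))) :=
      (tendsto_const_nhds.add he0).const_mul G
    rw [add_zero] at h2
    exact le_of_tendsto_of_tendsto' h1 h2 fun m => hcau n m t ht
  have h0 : (0 : ℝ) ∈ Ioo (-T) T := ⟨by linarith, hT⟩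
  refine ⟨y, ?_, fun t ht => ?_⟩
  · refine tendsto_nhds_unique (hy 0 h0) ?_
    simp [hq0]
  · refine hasDerivAt_of_tendstoUniformlyOn (l := atTop) (f := q) (f' := q') isOpen_Ioo
      (g' := fun t => A t (y t)) ?_ (Eventually.of_forall hq) hy ht
    rw [Metric.tendstoUniformlyOn_iff]
    intro r hr
    have h1 : Tendsto (fun n => (1 + L * G) * e n) atTop (𝓝 ((1 + L * G) * 0)) :=
      he0.const_mul _
    rw [mul_zero] at h1
    filter_upwards [h1.eventually_lt_const hr] with n hn s hs
    rw [dist_comm, dist_eq_norm]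
    have h2 : q' n s - A s (y s) = (q' n s - A s (q n s)) + A s (q n s - y s) := by
      rw [map_sub]; abel
    rw [h2]
    refine (norm_add_le _ _).trans_lt (lt_of_le_of_lt (add_le_add (hqe n s hs)
      ((A s).le_of_opNorm_le_of_le (hA s hs) (hqy n s hs))) ?_)
    calc e n + L * (G * e n) = (1 + L * G) * e n := by ring
      _ < r := hn

/-- Lipschitz and second order Taylor estimates for a smooth field on a ball. -/
lemma field_bounds [FiniteDimensional ℝ E] {ξ : E → E} (hξ : ContDiff ℝ (⊤ : ℕ∞) ξ) (M : ℝ) :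
    ∃ L ≥ (0 : ℝ), ∃ L₂ ≥ (0 : ℝ), (∀ z, ‖z‖ ≤ M → ‖fderiv ℝ ξ z‖ ≤ L) ∧
      (∀ z w, ‖z‖ ≤ M → ‖w‖ ≤ M → ‖ξ w - ξ z‖ ≤ L * ‖w - z‖) ∧
      (∀ z w, ‖z‖ ≤ M → ‖w‖ ≤ M → ‖ξ w - ξ z - fderiv ℝ ξ z (w - z)‖
        ≤ L₂ * ‖w - z‖ * ‖w - z‖) := by
  have hD : ContDiff ℝ (⊤ : ℕ∞) (fderiv ℝ ξ) := hξ.fderiv_right (by simp)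
  have hc1 : Continuous (fderiv ℝ ξ) := hD.continuous
  have hc2 : Continuous (fderiv ℝ (fderiv ℝ ξ)) := hD.continuous_fderiv (by simp)
  have hK := isCompact_closedBall (0 : E) M
  obtain ⟨L, hL⟩ := hK.exists_bound_of_continuousOn hc1.continuousOn
  obtain ⟨L₂, hL₂⟩ := hK.exists_bound_of_continuousOn hc2.continuousOn
  have hd1 : Differentiable ℝ ξ := hξ.differentiable (by simp)
  have hd2 : Differentiable ℝ (fderiv ℝ ξ) := hD.differentiable (by simp)
  have hB : ∀ z : E, ‖z‖ ≤ M → z ∈ Metric.closedBall (0 : E) M := fun z hz => by simpa using hz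
  have hconv := convex_closedBall (0 : E) M
  refine ⟨max L 0, le_max_right _ _, max L₂ 0, le_max_right _ _,
    fun z hz => (hL z (hB z hz)).trans (le_max_left _ _), fun z w hz hw => ?_,
    fun z w hz hw => ?_⟩
  · exact Convex.norm_image_sub_le_of_norm_fderiv_le (fun x _ => hd1 x)
      (fun x hx => (hL x hx).trans (le_max_left _ _)) hconv (hB z hz) (hB w hw)
  · refine Convex.norm_image_sub_le_of_norm_fderiv_le'
      (s := Metric.closedBall 0 M ∩ Metric.closedBall z ‖w - z‖) (fun x _ => hd1 x)
      (fun x hx => ?_) (hconv.inter (convex_closedBall _ _)) ⟨hB z hz, by simp⟩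
      ⟨hB w hw, by simp [dist_eq_norm]⟩
    refine (Convex.norm_image_sub_le_of_norm_fderiv_le (fun x _ => hd2 x)
      (fun x hx => (hL₂ x hx).trans (le_max_left _ 0)) hconv (hB z hz) hx.1).trans ?_
    exact mul_le_mul_of_nonneg_left (by simpa [dist_eq_norm] using hx.2) (le_max_right _ _)

namespace IsBddFlow

variable {ξ : E → E} {Φ : ℝ × E → E} {T : ℝ} {U : Set E}

lemma lipschitz [FiniteDimensional ℝ E] (h : IsBddFlow ξ Φ T U) (hξ : ContDiff ℝ (⊤ : ℕ∞) ξ) :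
    ∃ G > (0 : ℝ), ∀ t ∈ Ioo (-T) T, ∀ x ∈ U, ∀ y ∈ U, ‖Φ (t, y) - Φ (t, x)‖ ≤ G * ‖y - x‖ := by
  obtain ⟨M, hM⟩ := h.bdd
  obtain ⟨L, hL, L₂, hL₂, -, hlip, -⟩ := field_bounds hξ M
  refine ⟨Real.exp ((L + 1) * T), Real.exp_pos _, fun t ht x hx y hy => ?_⟩
  have := gronwall_sym (T := T) (K := L) (δ := ‖y - x‖) (e := 0)
      (y := fun s => Φ (s, y) - Φ (s, x)) hL (norm_nonneg _) le_rfl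
      (fun s hs => (h.deriv s hs y hy).sub (h.deriv s hs x hx))
      (by simp [h.init x hx, h.init y hy])
      (fun s hs => by simpa using hlip _ _ (hM s hs x hx) (hM s hs y hy)) ht
  simpa using this

lemma continuousOn [FiniteDimensional ℝ E] (h : IsBddFlow ξ Φ T U)
    (hξ : ContDiff ℝ (⊤ : ℕ∞) ξ) : ContinuousOn Φ (Ioo (-T) T ×ˢ U) := by
  obtain ⟨G, hG, hlip⟩ := h.lipschitz hξ
  rintro ⟨t, x⟩ ⟨ht, hx⟩
  have h1 : ContinuousAt (fun s => Φ (s, x)) t := (h.deriv t ht x hx).continuousAt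
  have h2 : Tendsto (fun p : ℝ × E => Φ (p.1, x)) (𝓝[Ioo (-T) T ×ˢ U] (t, x)) (𝓝 (Φ (t, x))) :=
    (h1.tendsto.comp (continuous_fst.tendsto (t, x))).mono_left nhdsWithin_le_nhds
  have h3 : Tendsto (fun p : ℝ × E => Φ p - Φ (p.1, x)) (𝓝[Ioo (-T) T ×ˢ U] (t, x)) (𝓝 0) := by
    refine squeeze_zero_norm' (a := fun p : ℝ × E => G * ‖p.2 - x‖) ?_ ?_
    · filter_upwards [self_mem_nhdsWithin] with p hp
      exact hlip p.1 hp.1 x hx p.2 hp.2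
    · have : Continuous fun p : ℝ × E => G * ‖p.2 - x‖ := by fun_prop
      have := (this.tendsto (t, x)).mono_left (nhdsWithin_le_nhds (s := Ioo (-T) T ×ˢ U))
      simpa using this
  have h4 := h3.add h2
  simpa [ContinuousWithinAt] using h4

/-- The flow is differentiable in the initial value, and its derivative solves the variational
equation. The solution of the latter is the limit of difference quotients of the flow. -/
lemma hasFDerivAt_init [FiniteDimensional ℝ E] (h : IsBddFlow ξ Φ T U)
    (hξ : ContDiff ℝ (⊤ : ℕ∞) ξ) (hT : 0 < T) (hU : IsOpen U) {x : E} (hx : x ∈ U) :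
    (∀ t ∈ Ioo (-T) T, DifferentiableAt ℝ (fun y => Φ (t, y)) x) ∧
    ∀ v, ∀ t ∈ Ioo (-T) T, HasDerivAt (fun s => fderiv ℝ (fun y => Φ (s, y)) x v)
      (fderiv ℝ ξ (Φ (t, x)) (fderiv ℝ (fun y => Φ (t, y)) x v)) t := by
  have : CompleteSpace E := FiniteDimensional.complete ℝ E
  obtain ⟨G, hG, hGlip⟩ := h.lipschitz hξ
  obtain ⟨M, hM⟩ := h.bdd
  obtain ⟨L, hL, L₂, hL₂, hD, -, htay⟩ := field_bounds hξ M
  have h0 : (0 : ℝ) ∈ Ioo (-T) T := ⟨by linarith, hT⟩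
  set A : ℝ → E →L[ℝ] E := fun t => fderiv ℝ ξ (Φ (t, x)) with hAdef
  have hA : ∀ t ∈ Ioo (-T) T, ‖A t‖ ≤ L := fun t ht => hD _ (hM t ht x hx)
  have hrem : ∀ t ∈ Ioo (-T) T, ∀ y ∈ U,
      ‖ξ (Φ (t, y)) - ξ (Φ (t, x)) - A t (Φ (t, y) - Φ (t, x))‖ ≤ L₂ * G ^ 2 * ‖y - x‖ ^ 2 := by
    intro t ht y hy
    refine (htay _ _ (hM t ht x hx) (hM t ht y hy)).trans ?_
    have := hGlip t ht x hx y hy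
    calc L₂ * ‖Φ (t, y) - Φ (t, x)‖ * ‖Φ (t, y) - Φ (t, x)‖
        = L₂ * (‖Φ (t, y) - Φ (t, x)‖) ^ 2 := by ring
      _ ≤ L₂ * (G * ‖y - x‖) ^ 2 := by gcongr
      _ = _ := by ring
  have hex : ∀ v : E, ∃ y : ℝ → E, y 0 = v ∧ ∀ t ∈ Ioo (-T) T, HasDerivAt y (A t (y t)) t := by
    intro v
    have hs : Tendsto (fun n : ℕ => (1 : ℝ) / ((n : ℝ) + 1)) atTop (𝓝 0) :=
      tendsto_one_div_add_atTop_nhds_zero_nat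
    have hsU : ∀ᶠ n : ℕ in atTop, x + ((1 : ℝ) / ((n : ℝ) + 1)) • v ∈ U := by
      have : Tendsto (fun n : ℕ => x + ((1 : ℝ) / ((n : ℝ) + 1)) • v) atTop
          (𝓝 (x + (0 : ℝ) • v)) := tendsto_const_nhds.add (hs.smul_const v)
      rw [zero_smul, add_zero] at this
      exact this.eventually_mem (hU.mem_nhds hx)
    obtain ⟨N, hN⟩ := eventually_atTop.1 hsU
    set s : ℕ → ℝ := fun n => 1 / (((n + N : ℕ) : ℝ) + 1) with hsdef
    have hsp : ∀ n, 0 < s n := fun n => by positivity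
    have hs0 : Tendsto s atTop (𝓝 0) := hs.comp (tendsto_add_atTop_nat N)
    have hsm : ∀ n, x + s n • v ∈ U := fun n => hN (n + N) (Nat.le_add_left _ _)
    refine linear_ode_of_approx (T := T) (L := L) hL hA (e := fun n => L₂ * G ^ 2 * ‖v‖ ^ 2 * s n)
      (q := fun n t => (s n)⁻¹ • (Φ (t, x + s n • v) - Φ (t, x)))
      (q' := fun n t => (s n)⁻¹ • (ξ (Φ (t, x + s n • v)) - ξ (Φ (t, x))))
      (fun n => by have := hsp n; positivity) ?_ ?_ ?_ ?_ hT
    · simpa using hs0.const_mul (L₂ * G ^ 2 * ‖v‖ ^ 2)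
    · intro n
      simp [h.init x hx, h.init _ (hsm n), smul_smul, inv_mul_cancel₀ (hsp n).ne']
    · intro n t ht
      exact ((h.deriv t ht _ (hsm n)).sub (h.deriv t ht x hx)).const_smul _
    · intro n t ht
      have := hrem t ht _ (hsm n)
      rw [map_smul, ← smul_sub, norm_smul, norm_inv, Real.norm_of_nonneg (hsp n).le]
      rw [add_sub_cancel_left, norm_smul, Real.norm_of_nonneg (hsp n).le] at this
      calc _ ≤ (s n)⁻¹ * (L₂ * G ^ 2 * (s n * ‖v‖) ^ 2) := by
            have := hsp n
            gcongr
        _ = _ := by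
            have := (hsp n).ne'
            field_simp
  choose Y hY0 hY using hex
  have huniq : ∀ (y z : ℝ → E), (∀ t ∈ Ioo (-T) T, HasDerivAt y (A t (y t)) t) →
      (∀ t ∈ Ioo (-T) T, HasDerivAt z (A t (z t)) t) → y 0 = z 0 →
      ∀ t ∈ Ioo (-T) T, y t = z t := by
    intro y z hy hz hyz t ht
    have := gronwall_sym (T := T) (K := L) (δ := 0) (e := 0)
      (y := fun s => y s - z s) hL le_rfl le_rfl
      (fun s hs => (hy s hs).sub (hz s hs)) (by simp [hyz])
      (fun s hs => by
        rw [← map_sub, add_zero]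
        exact (A s).le_of_opNorm_le (hA s hs) _) ht
    simpa [sub_eq_zero] using this
  have hlin : ∀ t ∈ Ioo (-T) T, IsLinearMap ℝ (fun v => Y v t) := by
    intro t ht
    constructor
    · intro v w
      refine huniq (Y (v + w)) (fun s => Y v s + Y w s) (hY _) (fun s hs => ?_)
        (by simp [hY0]) t ht
      rw [map_add]
      exact (hY v s hs).add (hY w s hs)
    · intro c v
      refine huniq (Y (c • v)) (fun s => c • Y v s) (hY _) (fun s hs => ?_) (by simp [hY0]) t ht
      rw [map_smul]
      exact (hY v s hs).const_smul c
  have hfd : ∀ t (ht : t ∈ Ioo (-T) T), HasFDerivAt (fun y => Φ (t, y))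
      (LinearMap.toContinuousLinearMap (IsLinearMap.mk' _ (hlin t ht))) x := by
    intro t ht
    rw [hasFDerivAt_iff_isLittleO_nhds_zero]
    refine Asymptotics.IsBigO.trans_isLittleO (g := fun v : E => ‖v‖ ^ 2) ?_
      (Asymptotics.isLittleO_norm_pow_id one_lt_two)
    refine Asymptotics.IsBigO.of_bound (Real.exp ((L + 1) * T) * (L₂ * G ^ 2)) ?_
    have hnear : ∀ᶠ v : E in 𝓝 0, x + v ∈ U := by
      have : Continuous fun v : E => x + v := by fun_prop
      exact this.continuousAt.eventually_mem (hU.mem_nhds (by simpa using hx))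
    filter_upwards [hnear] with v hv
    have := gronwall_sym (T := T) (K := L) (δ := 0) (e := L₂ * G ^ 2 * ‖v‖ ^ 2)
      (y := fun s => Φ (s, x + v) - Φ (s, x) - Y v s) hL le_rfl (by positivity)
      (fun s hs => ((h.deriv s hs _ hv).sub (h.deriv s hs x hx)).sub (hY v s hs))
      (by simp [h.init x hx, h.init _ hv, hY0])
      (fun s hs => by
        have h1 : ξ (Φ (s, x + v)) - ξ (Φ (s, x)) - A s (Y v s)
            = A s (Φ (s, x + v) - Φ (s, x) - Y v s)
              + (ξ (Φ (s, x + v)) - ξ (Φ (s, x)) - A s (Φ (s, x + v) - Φ (s, x))) := by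
          rw [map_sub (A s) (_ - _)]; abel
        rw [h1]
        refine (norm_add_le _ _).trans (add_le_add ((A s).le_of_opNorm_le (hA s hs) _) ?_)
        simpa using hrem s hs _ hv) ht
    simpa [mul_assoc] using this
  refine ⟨fun t ht => (hfd t ht).differentiableAt, fun v t ht => ?_⟩
  have heq : ∀ s ∈ Ioo (-T) T, fderiv ℝ (fun y => Φ (s, y)) x v = Y v s := fun s hs => by
    rw [(hfd s hs).fderiv]; rfl
  rw [heq t ht]
  refine (hY v t ht).congr_of_eventuallyEq ?_
  filter_upwards [isOpen_Ioo.mem_nhds ht] with s hs using heq s hs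

/-- The flow of the tangent field `(x, v) ↦ (ξ x, Dξ(x) v)` is the tangent map of the flow. -/
lemma tangent [FiniteDimensional ℝ E] (h : IsBddFlow ξ Φ T U)
    (hξ : ContDiff ℝ (⊤ : ℕ∞) ξ) (hT : 0 < T) (hU : IsOpen U) :
    IsBddFlow (fun p : E × E => (ξ p.1, fderiv ℝ ξ p.1 p.2))
      (fun q : ℝ × (E × E) => (Φ (q.1, q.2.1), fderiv ℝ (fun y => Φ (q.1, y)) q.2.1 q.2.2))
      T (U ×ˢ Metric.ball (0 : E) 1) where
  init := by
    rintro ⟨x, v⟩ ⟨hx, hv⟩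
    have h1 : (fun y => Φ (0, y)) =ᶠ[𝓝 x] id := by
      filter_upwards [hU.mem_nhds hx] with y hy using h.init y hy
    simp [h.init x hx, h1.fderiv_eq]
  deriv := by
    rintro t ht ⟨x, v⟩ ⟨hx, hv⟩
    exact (h.deriv t ht x hx).prodMk ((h.hasFDerivAt_init hξ hT hU hx).2 v t ht)
  bdd := by
    obtain ⟨M, hM⟩ := h.bdd
    obtain ⟨G, hG, hlip⟩ := h.lipschitz hξ
    refine ⟨max M G, ?_⟩
    rintro t ht ⟨x, v⟩ ⟨hx, hv⟩
    refine max_le_max (hM t ht x hx) ?_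
    have h1 : ‖fderiv ℝ (fun y => Φ (t, y)) x‖ ≤ G := by
      refine norm_fderiv_le_of_lip' ℝ hG.le ?_
      filter_upwards [hU.mem_nhds hx] with y hy using hlip t ht x hx y hy
    have h2 : ‖v‖ ≤ 1 := by simpa using (mem_ball_zero_iff.1 hv).le
    simpa using ContinuousLinearMap.le_of_opNorm_le_of_le _ h1 h2

/-- A bounded flow of a smooth field is `C^k`. The induction on `k` runs over all phase spaces
simultaneously: `C^k` regularity of the tangent flow is `C^(k+1)` regularity of the flow. -/
lemma contDiffOn_nat (k : ℕ) : ∀ {E : Type u} [NormedAddCommGroup E] [NormedSpace ℝ E]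
    [FiniteDimensional ℝ E] {ξ : E → E} {Φ : ℝ × E → E} {T : ℝ} {U : Set E},
    IsBddFlow ξ Φ T U → ContDiff ℝ (⊤ : ℕ∞) ξ → 0 < T → IsOpen U →
    ContDiffOn ℝ k Φ (Ioo (-T) T ×ˢ U) := by
  induction k with
  | zero =>
    intro E _ _ _ ξ Φ T U h hξ hT hU
    simpa using h.continuousOn hξ
  | succ k ih =>
    intro E _ _ _ ξ Φ T U h hξ hT hU
    have hopen : IsOpen (Ioo (-T) T ×ˢ U) := isOpen_Ioo.prod hU
    have hDξ : ContDiff ℝ (⊤ : ℕ∞) (fderiv ℝ ξ) := hξ.fderiv_right (by simp)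
    have hξ' : ContDiff ℝ (⊤ : ℕ∞) (fun p : E × E => (ξ p.1, fderiv ℝ ξ p.1 p.2)) :=
      (hξ.comp contDiff_fst).prodMk ((hDξ.comp contDiff_fst).clm_apply contDiff_snd)
    have hΦk := ih h hξ hT hU
    have htan := ih (h.tangent hξ hT hU) hξ' hT (hU.prod Metric.isOpen_ball)
    set J : ℝ → E → E →L[ℝ] E := fun t x => fderiv ℝ (fun y => Φ (t, y)) x with hJ
    have hJk : ContDiffOn ℝ k (fun p : ℝ × E => J p.1 p.2) (Ioo (-T) T ×ˢ U) := by
      rw [contDiffOn_clm_apply]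
      intro v
      -- The tangent flow is only known for `‖v‖ < 1`; linearity removes the restriction.
      set c : ℝ := ‖v‖ + 1 with hc
      have hcp : 0 < c := by positivity
      have hcv : c⁻¹ • v ∈ Metric.ball (0 : E) 1 := by
        rw [mem_ball_zero_iff, norm_smul, norm_inv, Real.norm_of_nonneg hcp.le,
          inv_mul_lt_iff₀ hcp]
        linarith
      have h1 : ContDiffOn ℝ k (fun p : ℝ × E => J p.1 p.2 (c⁻¹ • v)) (Ioo (-T) T ×ˢ U) := by
        have h2 : ContDiff ℝ k (fun p : ℝ × E => (p.1, (p.2, c⁻¹ • v))) := by fun_prop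
        have := (contDiff_snd.comp_contDiffOn htan).comp
          (s := Ioo (-T) T ×ˢ U) h2.contDiffOn (fun p hp => ⟨hp.1, hp.2, hcv⟩)
        exact this
      have h3 := h1.const_smul c
      refine h3.congr fun p _ => ?_
      simp only [map_smul, smul_smul, mul_inv_cancel₀ hcp.ne', one_smul]
    have hξΦ : ContDiffOn ℝ k (fun p : ℝ × E => ξ (Φ p)) (Ioo (-T) T ×ˢ U) :=
      (hξ.of_le (by exact_mod_cast le_top)).comp_contDiffOn hΦk
    have hder : ∀ p ∈ Ioo (-T) T ×ˢ U, HasFDerivAt Φ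
        (((1 : ℝ →L[ℝ] ℝ).smulRight (ξ (Φ p))).coprod (J p.1 p.2)) p := by
      intro p hp
      have hnear : ∀ᶠ q in 𝓝 p, q ∈ Ioo (-T) T ×ˢ U := hopen.mem_nhds hp
      have hcont1 : ContinuousAt
          (fun q : ℝ × E => (1 : ℝ →L[ℝ] ℝ).smulRight (ξ (Φ q))) p := by
        have : ContinuousAt (fun q : ℝ × E => ξ (Φ q)) p := hξΦ.continuousOn.continuousAt hnear
        exact (ContinuousLinearMap.smulRightL ℝ ℝ E (1 : ℝ →L[ℝ] ℝ)).continuous.continuousAt.comp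
          this
      have hcont2 : ContinuousAt (fun q : ℝ × E => J q.1 q.2) p :=
        hJk.continuousOn.continuousAt hnear
      exact (hasStrictFDerivAt_uncurry_coprod (𝕜 := ℝ) (u := p) (f := fun t x => Φ (t, x))
        (f₁ := fun t x => (1 : ℝ →L[ℝ] ℝ).smulRight (ξ (Φ (t, x)))) (f₂ := J)
        (by
          filter_upwards [hnear] with q hq
          exact (h.deriv q.1 hq.1 q.2 hq.2).hasFDerivAt)
        (by
          filter_upwards [hnear] with q hq
          exact ((h.hasFDerivAt_init hξ hT hU hq.2).1 q.1 hq.1).hasFDerivAt)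
        hcont1 hcont2).hasFDerivAt
    rw [Nat.cast_add, Nat.cast_one, contDiffOn_succ_iff_fderiv_of_isOpen hopen]
    refine ⟨fun p hp => (hder p hp).differentiableAt.differentiableWithinAt, by simp, ?_⟩
    rw [contDiffOn_clm_apply]
    rintro ⟨s, w⟩
    have : ContDiffOn ℝ k (fun p : ℝ × E => s • ξ (Φ p) + J p.1 p.2 w) (Ioo (-T) T ×ˢ U) :=
      (hξΦ.const_smul s).add (hJk.clm_apply contDiffOn_const)
    refine this.congr fun p hp => ?_
    rw [(hder p hp).fderiv]
    simp

lemma contDiffOn [FiniteDimensional ℝ E] (h : IsBddFlow ξ Φ T U)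
    (hξ : ContDiff ℝ (⊤ : ℕ∞) ξ) (hT : 0 < T) (hU : IsOpen U) :
    ContDiffOn ℝ (⊤ : ℕ∞) Φ (Ioo (-T) T ×ˢ U) :=
  contDiffOn_infty.2 fun k => contDiffOn_nat k h hξ hT hU

end IsBddFlow

end Flow

/-! ### Moderate nets with values in a normed space -/

section Nets

variable {E F G : Type*} [NormedAddCommGroup E] [NormedSpace ℝ E] [NormedAddCommGroup F]
  [NormedSpace ℝ F] [NormedAddCommGroup G] [NormedSpace ℝ G]

/-- Moderateness for nets with values in an arbitrary normed space. Constants are absorbed into the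
exponent, so that the bound is a pure power of `ε⁻¹`. -/
def IsMod (u : ℝ → E → F) : Prop :=
  ∀ K : Set E, IsCompact K → ∀ k : ℕ, ∃ p : ℕ, ∀ᶠ ε in 𝓝[>] (0 : ℝ), ∀ x ∈ K,
    ‖iteratedFDeriv ℝ k (u ε) x‖ ≤ ε⁻¹ ^ p

/-- The maps `u ε` are smooth near each compact set, for `ε` small depending on that set. -/
def IsLocSmooth (u : ℝ → E → F) : Prop :=
  ∀ K : Set E, IsCompact K → ∃ V : Set E, IsOpen V ∧ K ⊆ V ∧
    ∀ᶠ ε in 𝓝[>] (0 : ℝ), ContDiffOn ℝ (⊤ : ℕ∞) (u ε) V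

lemma eventually_small_iff {P : ℝ → Prop} :
    (∃ ε₀ > (0 : ℝ), ∀ ε : ℝ, 0 < ε → ε < ε₀ → P ε) ↔ ∀ᶠ ε in 𝓝[>] (0 : ℝ), P ε := by
  rw [Filter.Eventually, mem_nhdsGT_iff_exists_Ioo_subset]
  exact ⟨fun ⟨e, he, h⟩ => ⟨e, he, fun x hx => h x hx.1 hx.2⟩,
    fun ⟨e, he, h⟩ => ⟨e, he, fun x h1 h2 => h ⟨h1, h2⟩⟩⟩

lemma eventually_le_inv (C : ℝ) : ∀ᶠ ε in 𝓝[>] (0 : ℝ), C ≤ ε⁻¹ :=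
  tendsto_inv_nhdsGT_zero.eventually_ge_atTop C

lemma eventually_mem_Ioc : ∀ᶠ ε in 𝓝[>] (0 : ℝ), ε ∈ Ioc (0 : ℝ) 1 :=
  Ioc_mem_nhdsGT one_pos

lemma isMod_iff {u : ℝ → E → ℝ} : ModerateF u ↔ IsMod u := by
  unfold ModerateF IsMod
  refine forall_congr' fun K => forall_congr' fun _ => forall_congr' fun k => ⟨?_, ?_⟩
  · rintro ⟨p, C, hC, h⟩
    refine ⟨p + 1, ?_⟩
    filter_upwards [eventually_small_iff.1 h, eventually_le_inv C, eventually_mem_Ioc]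
      with ε h1 h2 h3 x hx
    have := h3.1
    refine (h1 x hx).trans ?_
    rw [div_eq_inv_mul, ← inv_pow, pow_succ]
    gcongr
  · rintro ⟨p, h⟩
    refine ⟨p, 1, one_pos, eventually_small_iff.2 ?_⟩
    filter_upwards [h] with ε h x hx
    simpa using h x hx

lemma negligibleF_iff {u : ℝ → E → ℝ} : NegligibleF u ↔ IsMod u ∧
    ∀ K : Set E, IsCompact K → ∀ m : ℕ, ∀ᶠ ε in 𝓝[>] (0 : ℝ), ∀ x ∈ K, |u ε x| ≤ ε ^ m := by
  unfold NegligibleF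
  rw [isMod_iff]
  refine and_congr_right fun _ => forall_congr' fun K => forall_congr' fun _ => ⟨?_, ?_⟩
  · intro h m
    obtain ⟨C, hC, h⟩ := h (m + 1)
    filter_upwards [eventually_small_iff.1 h, eventually_le_inv C, eventually_mem_Ioc]
      with ε h1 h2 h3 x hx
    have h4 := h3.1
    refine (h1 x hx).trans ?_
    calc C * ε ^ (m + 1) ≤ ε⁻¹ * ε ^ (m + 1) := by gcongr
      _ = ε ^ m := by rw [pow_succ]; field_simp
  · intro h m
    refine ⟨1, one_pos, eventually_small_iff.2 ?_⟩
    filter_upwards [h m] with ε h x hx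
    simpa using h x hx

lemma inv_pow_mono {ε : ℝ} (hε : ε ∈ Ioc (0 : ℝ) 1) {p q : ℕ} (h : p ≤ q) :
    ε⁻¹ ^ p ≤ ε⁻¹ ^ q :=
  pow_le_pow_right₀ ((one_le_inv₀ hε.1).2 hε.2) h

/-- A single exponent serves for all derivatives up to a given order. -/
lemma IsMod.uniform {u : ℝ → E → F} (hu : IsMod u) {K : Set E} (hK : IsCompact K) (N : ℕ) :
    ∃ p : ℕ, ∀ᶠ ε in 𝓝[>] (0 : ℝ), ∀ k ≤ N, ∀ x ∈ K,
      ‖iteratedFDeriv ℝ k (u ε) x‖ ≤ ε⁻¹ ^ p := by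
  choose p hp using hu K hK
  refine ⟨(Finset.range (N + 1)).sup p, ?_⟩
  have h1 : ∀ᶠ ε in 𝓝[>] (0 : ℝ), ∀ k ∈ Finset.range (N + 1), ∀ x ∈ K,
      ‖iteratedFDeriv ℝ k (u ε) x‖ ≤ ε⁻¹ ^ p k :=
    (Filter.eventually_all_finset _).2 fun k _ => hp k
  filter_upwards [h1, eventually_mem_Ioc] with ε h h' k hk x hx
  have hk' : k ∈ Finset.range (N + 1) := Finset.mem_range.2 (by omega)
  exact (h k hk' x hx).trans (inv_pow_mono h' (Finset.le_sup hk'))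

lemma IsLocSmooth.of_contDiff {u : ℝ → E → F}
    (hu : ∀ ε ∈ Ioc (0 : ℝ) 1, ContDiff ℝ (⊤ : ℕ∞) (u ε)) : IsLocSmooth u := fun K _ =>
  ⟨univ, isOpen_univ, subset_univ K, eventually_mem_Ioc.mono fun ε hε => (hu ε hε).contDiffOn⟩

/-- A net that does not depend on `ε` is moderate. -/
lemma IsMod.of_const {u : E → F} (hu : ContDiff ℝ (⊤ : ℕ∞) u) : IsMod (fun _ : ℝ => u) := by
  intro K hK k
  obtain ⟨C, hC⟩ := hK.exists_bound_of_continuousOn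
    (hu.continuous_iteratedFDeriv (m := k) (by exact_mod_cast le_top)).continuousOn
  refine ⟨1, ?_⟩
  filter_upwards [eventually_le_inv C] with ε h x hx
  simpa using (hC x hx).trans h

lemma IsMod.sub {u v : ℝ → E → F} (hu : IsMod u) (hv : IsMod v) (hus : IsLocSmooth u)
    (hvs : IsLocSmooth v) : IsMod (fun ε x => u ε x - v ε x) := by
  intro K hK k
  obtain ⟨p, hp⟩ := hu K hK k
  obtain ⟨q, hq⟩ := hv K hK k
  obtain ⟨V, hV, hKV, hVs⟩ := hus K hK
  obtain ⟨W, hW, hKW, hWs⟩ := hvs K hK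
  refine ⟨max p q + 1, ?_⟩
  filter_upwards [hp, hq, hVs, hWs, eventually_le_inv 2, eventually_mem_Ioc]
    with ε h1 h2 h3 h4 h5 h6 x hx
  have hle : ((k : ℕ) : WithTop ℕ∞) ≤ ((⊤ : ℕ∞) : WithTop ℕ∞) := by exact_mod_cast le_top
  have e1 : ContDiffAt ℝ k (u ε) x := ((h3.contDiffAt (hV.mem_nhds (hKV hx)))).of_le hle
  have e2 : ContDiffAt ℝ k (v ε) x := ((h4.contDiffAt (hW.mem_nhds (hKW hx)))).of_le hle
  have e3 := iteratedFDeriv_sub_apply e1 e2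
  have e4 : (fun x => u ε x - v ε x) = u ε - v ε := rfl
  rw [e4, e3]
  have hpos : 0 ≤ ε⁻¹ ^ max p q := by have := h6.1; positivity
  calc _ ≤ ε⁻¹ ^ p + ε⁻¹ ^ q := (norm_sub_le _ _).trans (add_le_add (h1 x hx) (h2 x hx))
    _ ≤ ε⁻¹ ^ max p q + ε⁻¹ ^ max p q :=
        add_le_add (inv_pow_mono h6 (le_max_left _ _)) (inv_pow_mono h6 (le_max_right _ _))
    _ = ε⁻¹ ^ max p q * 2 := by ring
    _ ≤ ε⁻¹ ^ (max p q + 1) := by rw [pow_succ]; gcongr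

/-- Composing a moderate net with a c-bounded moderate net gives a moderate net, by the
Faà di Bruno bound. -/
lemma IsMod.comp {g : ℝ → F → G} {u : ℝ → E → F} (hg : IsMod g)
    (hgs : ∀ ε ∈ Ioc (0 : ℝ) 1, ContDiff ℝ (⊤ : ℕ∞) (g ε))
    (hu : IsMod u) (hus : IsLocSmooth u) (hcb : CBoundedMap u) :
    IsMod (fun ε x => g ε (u ε x)) := by
  intro K hK k
  obtain ⟨e₀, he₀, K', hK', hmap⟩ := hcb K hK
  have hmap' := eventually_small_iff.1 ⟨e₀, he₀, hmap⟩
  obtain ⟨p, hp⟩ := hg.uniform hK' k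
  obtain ⟨q, hq⟩ := hu.uniform hK k
  obtain ⟨V, hV, hKV, hVs⟩ := hus K hK
  refine ⟨p + q * k + 1, ?_⟩
  filter_upwards [hmap', hp, hq, hVs, eventually_le_inv (k.factorial : ℝ), eventually_mem_Ioc]
    with ε h1 h2 h3 h4 h5 h6 x hx
  have hone : 1 ≤ ε⁻¹ ^ q := one_le_pow₀ ((one_le_inv₀ h6.1).2 h6.2)
  have hb := norm_iteratedFDerivWithin_comp_le (𝕜 := ℝ) (g := g ε) (f := u ε) (n := k) (s := V)
    (t := univ) (N := ((⊤ : ℕ∞) : WithTop ℕ∞)) (C := ε⁻¹ ^ p) (D := ε⁻¹ ^ q)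
    (hgs ε h6).contDiffOn h4 (by exact_mod_cast le_top) uniqueDiffOn_univ hV.uniqueDiffOn
    (mapsTo_univ _ _) (hKV hx)
    (fun i hi => by
      rw [iteratedFDerivWithin_univ]
      exact h2 i hi _ (h1 x hx))
    (fun i hi1 hi => by
      rw [iteratedFDerivWithin_of_isOpen i hV (hKV hx)]
      exact (h3 i hi x hx).trans (le_self_pow₀ hone (by omega)))
  rw [iteratedFDerivWithin_of_isOpen k hV (hKV hx)] at hb
  refine hb.trans ?_
  have hpos : 0 < ε⁻¹ := inv_pos.2 h6.1
  calc (k.factorial : ℝ) * ε⁻¹ ^ p * (ε⁻¹ ^ q) ^ k ≤ ε⁻¹ * ε⁻¹ ^ p * (ε⁻¹ ^ q) ^ k := by gcongr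
    _ = ε⁻¹ ^ (p + q * k + 1) := by rw [← pow_mul]; ring

lemma IsMod.fderiv {f : ℝ → E → F} (hf : IsMod f) : IsMod (fun ε => fderiv ℝ (f ε)) := by
  intro K hK k
  obtain ⟨p, hp⟩ := hf K hK (k + 1)
  refine ⟨p, hp.mono fun ε h x hx => ?_⟩
  rw [norm_iteratedFDeriv_fderiv]
  exact h x hx

/-- Moderateness of a pairing, by the Leibniz rule. -/
lemma IsMod.clm_apply {L : ℝ → E → F →L[ℝ] G} {u : ℝ → E → F} (hL : IsMod L) (hu : IsMod u)
    (hLs : ∀ ε ∈ Ioc (0 : ℝ) 1, ContDiff ℝ (⊤ : ℕ∞) (L ε))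
    (hus : ∀ ε ∈ Ioc (0 : ℝ) 1, ContDiff ℝ (⊤ : ℕ∞) (u ε)) :
    IsMod (fun ε x => L ε x (u ε x)) := by
  intro K hK k
  obtain ⟨p, hp⟩ := hL.uniform hK k
  obtain ⟨q, hq⟩ := hu.uniform hK k
  refine ⟨p + q + 1, ?_⟩
  filter_upwards [hp, hq, eventually_le_inv ((2 : ℝ) ^ k), eventually_mem_Ioc]
    with ε h1 h2 h3 h4 x hx
  have hpos : 0 < ε⁻¹ := inv_pos.2 h4.1
  refine (norm_iteratedFDeriv_clm_apply (hLs ε h4) (hus ε h4) x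
    (by exact_mod_cast le_top)).trans ?_
  calc _ ≤ ∑ i ∈ Finset.range (k + 1), (k.choose i : ℝ) * ε⁻¹ ^ p * ε⁻¹ ^ q := by
        refine Finset.sum_le_sum fun i hi => ?_
        have := h1 i (by have := Finset.mem_range.1 hi; omega) x hx
        have := h2 (k - i) (Nat.sub_le _ _) x hx
        gcongr
    _ = 2 ^ k * (ε⁻¹ ^ p * ε⁻¹ ^ q) := by
        simp_rw [mul_assoc]
        rw [← Finset.sum_mul, ← Nat.cast_sum, Nat.sum_range_choose]
        norm_num
    _ ≤ ε⁻¹ * (ε⁻¹ ^ p * ε⁻¹ ^ q) := by gcongr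
    _ = ε⁻¹ ^ (p + q + 1) := by ring

/-- Componentwise moderateness is moderateness for the sup norm, provided the maps are smooth, so
that taking derivatives commutes with taking components. -/
lemma IsMod.of_moderateV {n : ℕ} {u : ℝ → E → (Fin n → ℝ)} (hu : ModerateV u)
    (hus : IsLocSmooth u) : IsMod u := by
  intro K hK k
  choose p hp using fun i => isMod_iff.1 (hu i) K hK k
  obtain ⟨V, hV, hKV, hVs⟩ := hus K hK
  refine ⟨Finset.univ.sup p, ?_⟩
  filter_upwards [Filter.eventually_all.2 hp, hVs, eventually_mem_Ioc] with ε h1 h2 h3 x hx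
  have hpos : 0 < ε⁻¹ := inv_pos.2 h3.1
  refine ContinuousMultilinearMap.opNorm_le_bound (by positivity) fun m => ?_
  rw [pi_norm_le_iff_of_nonneg (by positivity)]
  intro i
  have e1 := ContinuousLinearMap.iteratedFDeriv_comp_left
    (ContinuousLinearMap.proj (R := ℝ) (φ := fun _ : Fin n => ℝ) i)
    (h2.contDiffAt (hV.mem_nhds (hKV hx))) (i := k) (by exact_mod_cast le_top)
  have e2 : iteratedFDeriv ℝ k (u ε) x m i = iteratedFDeriv ℝ k (fun y => u ε y i) x m := by
    have e3 : (fun y => u ε y i)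
        = (ContinuousLinearMap.proj (R := ℝ) (φ := fun _ : Fin n => ℝ) i) ∘ u ε := rfl
    rw [e3, e1]
    rfl
  rw [e2]
  refine ContinuousMultilinearMap.le_of_opNorm_le ?_ m
  exact (h1 i x hx).trans (inv_pow_mono h3 (Finset.le_sup (Finset.mem_univ i)))

end Nets

/-! ### Invariance and its infinitesimal version -/

lemma compact_subset_cylinder {E : Type*} [NormedAddCommGroup E] {K : Set (ℝ × E)}
    (hK : IsCompact K) : ∃ R > (0 : ℝ), ∀ p ∈ K, p.1 ∈ Ioo (-R) R ∧ p.2 ∈ Metric.ball 0 R := by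
  obtain ⟨C, hC⟩ := hK.isBounded.exists_norm_le
  refine ⟨max C 0 + 1, by positivity, fun p hp => ?_⟩
  have h := hC p hp
  have h1 : ‖p.1‖ < max C 0 + 1 := by linarith [norm_fst_le p, le_max_left C 0]
  have h2 : ‖p.2‖ < max C 0 + 1 := by linarith [norm_snd_le p, le_max_left C 0]
  rw [Real.norm_eq_abs, abs_lt] at h1
  exact ⟨h1, mem_ball_zero_iff.2 h2⟩

/-- A c-bounded net of flows is smooth near each compact set: c-boundedness makes the restriction
to a cylinder a bounded flow for small `ε`. -/
lemma isLocSmooth_flow {n : ℕ} {ξ : ℝ → (Fin n → ℝ) → (Fin n → ℝ)}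
    {Φ : ℝ → (ℝ × (Fin n → ℝ)) → (Fin n → ℝ)}
    (hξsm : ∀ ε ∈ Set.Ioc (0:ℝ) 1, ContDiff ℝ (⊤ : ℕ∞) (ξ ε))
    (hflow0 : ∀ ε ∈ Set.Ioc (0:ℝ) 1, ∀ x : Fin n → ℝ, Φ ε (0, x) = x)
    (hflow : ∀ ε ∈ Set.Ioc (0:ℝ) 1, ∀ (t : ℝ) (x : Fin n → ℝ),
      HasDerivAt (fun s => Φ ε (s, x)) (ξ ε (Φ ε (t, x))) t)
    (hΦcb : CBoundedMap Φ) : IsLocSmooth Φ := by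
  intro K hK
  obtain ⟨R, hR, hKR⟩ := compact_subset_cylinder hK
  obtain ⟨e₀, he₀, K', hK', hmap⟩ := hΦcb (Icc (-R) R ×ˢ Metric.closedBall 0 R)
    (isCompact_Icc.prod (isCompact_closedBall _ _))
  obtain ⟨M, hM⟩ := hK'.isBounded.exists_norm_le
  refine ⟨Ioo (-R) R ×ˢ Metric.ball 0 R, isOpen_Ioo.prod Metric.isOpen_ball,
    fun p hp => hKR p hp, ?_⟩
  filter_upwards [eventually_small_iff.1 ⟨e₀, he₀, hmap⟩, eventually_mem_Ioc] with ε h1 h2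
  refine IsBddFlow.contDiffOn (ξ := ξ ε) ⟨fun x _ => hflow0 ε h2 x,
    fun t _ x _ => hflow ε h2 t x, M, fun t ht x hx => ?_⟩ (hξsm ε h2) hR Metric.isOpen_ball
  exact hM _ (h1 _ ⟨Ioo_subset_Icc_self ht, Metric.ball_subset_closedBall hx⟩)

/-- Moderateness of the increment of a moderate net along a c-bounded moderate flow. -/
lemma IsMod.flow_increment {n : ℕ} {f : ℝ → (Fin n → ℝ) → ℝ}
    {Φ : ℝ → (ℝ × (Fin n → ℝ)) → (Fin n → ℝ)} (hf : IsMod f)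
    (hfs : ∀ ε ∈ Set.Ioc (0:ℝ) 1, ContDiff ℝ (⊤ : ℕ∞) (f ε))
    (hΦ : IsMod Φ) (hΦs : IsLocSmooth Φ) (hΦcb : CBoundedMap Φ) :
    IsMod (fun ε (p : ℝ × (Fin n → ℝ)) => f ε (Φ ε p) - f ε p.2) := by
  have m1 : IsMod (fun ε (p : ℝ × (Fin n → ℝ)) => f ε (Φ ε p)) := hf.comp hfs hΦ hΦs hΦcb
  have s1 : IsLocSmooth (fun ε (p : ℝ × (Fin n → ℝ)) => f ε (Φ ε p)) := by
    intro K hK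
    obtain ⟨V, hV, hKV, hVs⟩ := hΦs K hK
    refine ⟨V, hV, hKV, ?_⟩
    filter_upwards [hVs, eventually_mem_Ioc] with ε h1 h2
    exact (hfs ε h2).comp_contDiffOn h1
  have hsnd : ContDiff ℝ (⊤ : ℕ∞) (Prod.snd : ℝ × (Fin n → ℝ) → (Fin n → ℝ)) := contDiff_snd
  have m2 : IsMod (fun ε (p : ℝ × (Fin n → ℝ)) => f ε p.2) := by
    refine IsMod.comp (u := fun _ => Prod.snd) hf hfs (IsMod.of_const hsnd)
      (IsLocSmooth.of_contDiff fun _ _ => hsnd) ?_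
    exact fun K hK => ⟨1, one_pos, Prod.snd '' K, hK.image continuous_snd,
      fun _ _ _ x hx => mem_image_of_mem _ hx⟩
  have s2 : IsLocSmooth (fun ε (p : ℝ × (Fin n → ℝ)) => f ε p.2) :=
    IsLocSmooth.of_contDiff fun ε hε => (hfs ε hε).comp hsnd
  exact m1.sub m2 s1 s2

/-- a moderate net `f` is invariant under the generalized group action
given by the flows `Φ_ε` of a moderate net of smooth complete vector fields `ξ_ε`
(with `(Φ_ε)` c-bounded and moderate) if and only if `ξ(f) = 0` in the Colombeau
algebra, i.e. the net `x ↦ Df_ε(x)·ξ_ε(x)` is negligible. -/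
theorem stmt9 {n : ℕ}
    (ξ : ℝ → (Fin n → ℝ) → (Fin n → ℝ))
    (Φ : ℝ → (ℝ × (Fin n → ℝ)) → (Fin n → ℝ))
    (hξsm : ∀ ε ∈ Set.Ioc (0:ℝ) 1, ContDiff ℝ (⊤ : ℕ∞) (ξ ε))
    (hξmod : ModerateV ξ)
    (hflow0 : ∀ ε ∈ Set.Ioc (0:ℝ) 1, ∀ x : Fin n → ℝ, Φ ε (0, x) = x)
    (hflow : ∀ ε ∈ Set.Ioc (0:ℝ) 1, ∀ (t : ℝ) (x : Fin n → ℝ),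
      HasDerivAt (fun s => Φ ε (s, x)) (ξ ε (Φ ε (t, x))) t)
    (hΦcb : CBoundedMap Φ) (hΦmod : ModerateV Φ)
    (f : ℝ → (Fin n → ℝ) → ℝ)
    (hfs : ∀ ε ∈ Set.Ioc (0:ℝ) 1, ContDiff ℝ (⊤ : ℕ∞) (f ε))
    (hfmod : ModerateF f) :
    NegligibleF (fun ε (p : ℝ × (Fin n → ℝ)) => f ε (Φ ε p) - f ε p.2) ↔
    NegligibleF (fun ε x => fderiv ℝ (f ε) x (ξ ε x)) := by
  rw [negligibleF_iff, negligibleF_iff]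
  have hξM : IsMod ξ := IsMod.of_moderateV hξmod (IsLocSmooth.of_contDiff hξsm)
  have hfM : IsMod f := isMod_iff.1 hfmod
  have hDfs : ∀ ε ∈ Set.Ioc (0:ℝ) 1, ContDiff ℝ (⊤ : ℕ∞) (fderiv ℝ (f ε)) :=
    fun ε hε => (hfs ε hε).fderiv_right (by simp)
  set h : ℝ → (Fin n → ℝ) → ℝ := fun ε x => fderiv ℝ (f ε) x (ξ ε x) with hh
  have hhM : IsMod h := hfM.fderiv.clm_apply hξM hDfs hξsm
  have hhs : ∀ ε ∈ Set.Ioc (0:ℝ) 1, ContDiff ℝ (⊤ : ℕ∞) (h ε) :=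
    fun ε hε => (hDfs ε hε).clm_apply (hξsm ε hε)
  -- Differentiation along an orbit is the action of the field.
  have hderiv : ∀ (g : ℝ → (Fin n → ℝ) → ℝ),
      (∀ ε ∈ Set.Ioc (0:ℝ) 1, ContDiff ℝ (⊤ : ℕ∞) (g ε)) → ∀ ε ∈ Set.Ioc (0:ℝ) 1, ∀ t x,
      HasDerivAt (fun s => g ε (Φ ε (s, x)))
        (fderiv ℝ (g ε) (Φ ε (t, x)) (ξ ε (Φ ε (t, x)))) t := by
    intro g hg ε hε t x
    exact (((hg ε hε).differentiable (by simp)) _).hasFDerivAt.comp_hasDerivAt t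
      (hflow ε hε t x)
  constructor
  · rintro ⟨-, hneg⟩
    refine ⟨hhM, fun K hK m => ?_⟩
    obtain ⟨e₀, he₀, K', hK', hmap⟩ := hΦcb (Icc 0 1 ×ˢ K) (isCompact_Icc.prod hK)
    obtain ⟨p, hp⟩ := hhM.uniform hK' 1
    obtain ⟨q, hq⟩ := hξM.uniform hK' 0
    obtain ⟨r, hr⟩ : ∃ r, r = p + q := ⟨_, rfl⟩
    -- Compare the increment over the time step `s = ε ^ (r + (m + 1))` with its linear part.
    filter_upwards [eventually_small_iff.1 ⟨e₀, he₀, hmap⟩, hp, hq, eventually_mem_Ioc,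
      hneg _ (isCompact_Icc.prod hK) (r + (m + 1) + (m + 1)), eventually_le_inv 2]
      with ε h1 h2 h3 h4 h5 h6 x hx
    have hε := h4.1
    set s := ε ^ (r + (m + 1)) with hs
    have hs0 : 0 < s := by positivity
    have hs1 : s ≤ 1 := pow_le_one₀ hε.le h4.2
    have hB : 0 ≤ ε⁻¹ ^ r := by positivity
    have hmem : ∀ t ∈ Icc 0 s, Φ ε (t, x) ∈ K' := fun t ht =>
      h1 _ ⟨⟨ht.1, ht.2.trans hs1⟩, hx⟩
    have hsec : ∀ t ∈ Icc 0 s, ‖h ε (Φ ε (t, x)) - h ε x‖ ≤ ε⁻¹ ^ r * s := by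
      intro t ht
      have := Convex.norm_image_sub_le_of_norm_hasDerivWithin_le (s := Icc 0 s)
        (C := ε⁻¹ ^ r) (f := fun t => h ε (Φ ε (t, x)))
        (fun t _ => (hderiv h hhs ε h4 t x).hasDerivWithinAt)
        (fun t ht => by
          have e1 := h2 1 le_rfl _ (hmem t ht)
          have e2 := h3 0 le_rfl _ (hmem t ht)
          rw [norm_iteratedFDeriv_one] at e1
          rw [norm_iteratedFDeriv_zero] at e2
          rw [hr, pow_add]
          exact ContinuousLinearMap.le_of_opNorm_le_of_le _ e1 e2)
        (convex_Icc _ _) (left_mem_Icc.2 hs0.le) ht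
      simp only [hflow0 ε h4] at this
      refine this.trans (mul_le_mul_of_nonneg_left ?_ hB)
      rw [sub_zero, Real.norm_of_nonneg ht.1]
      exact ht.2
    have hfirst := Convex.norm_image_sub_le_of_norm_hasDerivWithin_le (s := Icc 0 s)
        (C := ε⁻¹ ^ r * s) (f := fun t => f ε (Φ ε (t, x)) - t * h ε x)
        (f' := fun t => h ε (Φ ε (t, x)) - 1 * h ε x)
        (fun t _ => ((hderiv f hfs ε h4 t x).sub
          ((hasDerivAt_id t).mul_const (h ε x))).hasDerivWithinAt)
        (fun t ht => by simpa using hsec t ht)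
        (convex_Icc _ _) (left_mem_Icc.2 hs0.le) (right_mem_Icc.2 hs0.le)
    simp only [hflow0 ε h4, zero_mul, sub_zero, Real.norm_of_nonneg hs0.le] at hfirst
    have hval : |f ε (Φ ε (s, x)) - f ε x| ≤ s * ε ^ (m + 1) := by
      rw [hs, ← pow_add]
      exact h5 (s, x) ⟨⟨hs0.le, hs1⟩, hx⟩
    have hrs : ε⁻¹ ^ r * s = ε ^ (m + 1) := by
      rw [hs, pow_add ε r (m + 1), ← mul_assoc, ← mul_pow, inv_mul_cancel₀ hε.ne', one_pow, one_mul]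
    rw [hrs] at hfirst
    have hmain : s * |h ε x| ≤ s * (2 * ε ^ (m + 1)) := by
      rw [← abs_of_pos hs0, ← abs_mul, abs_of_pos hs0]
      calc |s * h ε x| = |(f ε (Φ ε (s, x)) - f ε x) - (f ε (Φ ε (s, x)) - s * h ε x - f ε x)| := by
            congr 1; ring
        _ ≤ s * ε ^ (m + 1) + ε ^ (m + 1) * s := (abs_sub _ _).trans (add_le_add hval hfirst)
        _ = _ := by ring
    calc |h ε x| ≤ 2 * ε ^ (m + 1) := le_of_mul_le_mul_left hmain hs0
      _ ≤ ε⁻¹ * ε ^ (m + 1) := by gcongr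
      _ = ε ^ m := by rw [pow_succ]; field_simp
  · rintro ⟨-, hneg⟩
    have hΦs := isLocSmooth_flow hξsm hflow0 hflow hΦcb
    constructor
    · exact hfM.flow_increment hfs (IsMod.of_moderateV hΦmod hΦs) hΦs hΦcb
    · intro K hK m
      obtain ⟨R, hR, hKR⟩ := compact_subset_cylinder hK
      obtain ⟨e₀, he₀, K', hK', hmap⟩ := hΦcb (Icc (-R) R ×ˢ Metric.closedBall 0 R)
        (isCompact_Icc.prod (isCompact_closedBall _ _))
      filter_upwards [eventually_small_iff.1 ⟨e₀, he₀, hmap⟩, hneg K' hK' (m + 1),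
        eventually_mem_Ioc, eventually_le_inv R] with ε h1 h2 h3 h4
      rintro ⟨t, x⟩ hp
      obtain ⟨ht, hx⟩ := hKR _ hp
      have hε := h3.1
      have := Convex.norm_image_sub_le_of_norm_hasDerivWithin_le (s := Ioo (-R) R)
        (C := ε ^ (m + 1)) (f := fun t => f ε (Φ ε (t, x)))
        (fun t _ => (hderiv f hfs ε h3 t x).hasDerivWithinAt)
        (fun t ht => h2 _ (h1 _ ⟨Ioo_subset_Icc_self ht, Metric.ball_subset_closedBall hx⟩))
        (convex_Ioo _ _) (⟨by linarith, hR⟩ : (0 : ℝ) ∈ Ioo (-R) R) ht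
      simp only [hflow0 ε h3, sub_zero] at this
      refine this.trans ?_
      have htR : ‖t‖ ≤ ε⁻¹ := (abs_lt.2 ht).le.trans h4
      calc ε ^ (m + 1) * ‖t‖ ≤ ε ^ (m + 1) * ε⁻¹ := by gcongr
        _ = ε ^ m := by rw [pow_succ]; field_simp
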